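/- For ε = (ε₄,ε₅,ε₆,ε₇) ∈ {0, ½}⁴ let C_ε = { x ∈ T⁷ : x₄ = ε₄, x₅ = ε₅, x₆ = ε₆, x₇ = ε₇ } be the corresponding component 3-torus of the fixed point set of α. Then β maps C_{(ε₄,ε₅,ε₆,ε₇)} bijectively onto C_{(ε₄,ε₅,ε₆+½,ε₇)} and γ maps C_{(ε₄,ε₅,ε₆,ε₇)} bijectively onto C_{(ε₄,ε₅+½,ε₆,ε₇+½)}. Consequently the induced action of the group generated by β and γ on the 16 components C_ε is free and has exactly 4 orbits. -/

import Mathlib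

/-- The 7-torus `T⁷ = (ℝ/ℤ)⁷`. -/
abbrev T7 : Type := Fin 7 → AddCircle (1 : ℝ)

/-- The element `½ ∈ ℝ/ℤ`. -/
noncomputable def half : AddCircle (1 : ℝ) := ((1 / 2 : ℝ) : AddCircle (1 : ℝ))

/-- `α(x) = (x₁, x₂, x₃, −x₄, −x₅, −x₆, −x₇)` on `T⁷` (with 0-based indexing). -/
noncomputable def tα : T7 → T7 := fun x => ![x 0, x 1, x 2, -x 3, -x 4, -x 5, -x 6]

/-- `β(x) = (x₁, −x₂, −x₃, x₄, x₅, ½−x₆, −x₇)` on `T⁷` (with 0-based indexing). -/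
noncomputable def tβ : T7 → T7 := fun x => ![x 0, -x 1, -x 2, x 3, x 4, half - x 5, -x 6]

/-- `γ(x) = (−x₁, x₂, −x₃, x₄, ½−x₅, x₆, ½−x₇)` on `T⁷` (with 0-based indexing). -/
noncomputable def tγ : T7 → T7 := fun x => ![-x 0, x 1, -x 2, x 3, half - x 4, x 5, half - x 6]

lemma tα_invol : Function.Involutive tα := by
  intro x; funext i
  fin_cases i
  · rfl
  · rfl
  · rfl
  · exact neg_neg _
  · exact neg_neg _
  · exact neg_neg _
  · exact neg_neg _

lemma tβ_invol : Function.Involutive tβ := by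
  intro x; funext i
  fin_cases i
  · rfl
  · exact neg_neg _
  · exact neg_neg _
  · rfl
  · rfl
  · exact sub_sub_cancel _ _
  · exact neg_neg _

lemma tγ_invol : Function.Involutive tγ := by
  intro x; funext i
  fin_cases i
  · exact neg_neg _
  · rfl
  · exact neg_neg _
  · rfl
  · exact sub_sub_cancel _ _
  · rfl
  · exact sub_sub_cancel _ _

/-- `α` as a bijection (element of the group of bijections) of `T⁷`. -/
noncomputable def pα : Equiv.Perm T7 := Function.Involutive.toPerm tα tα_invol

/-- `β` as a bijection (element of the group of bijections) of `T⁷`. -/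
noncomputable def pβ : Equiv.Perm T7 := Function.Involutive.toPerm tβ tβ_invol

/-- `γ` as a bijection (element of the group of bijections) of `T⁷`. -/
noncomputable def pγ : Equiv.Perm T7 := Function.Involutive.toPerm tγ tγ_invol

/-- The set of tuples `(ε₄,ε₅,ε₆,ε₇) ∈ {0,½}⁴`. -/
noncomputable def E4 : Set (Fin 4 → AddCircle (1 : ℝ)) := {e | ∀ i, e i = 0 ∨ e i = half}

/-- The component 3-torus `C_ε = {x ∈ T⁷ : x₄ = ε₄, x₅ = ε₅, x₆ = ε₆, x₇ = ε₇}` of the fixed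
point set of `α` (0-based indices 3,4,5,6). -/
def Ctor (ε : Fin 4 → AddCircle (1 : ℝ)) : Set T7 :=
  {x | x 3 = ε 0 ∧ x 4 = ε 1 ∧ x 5 = ε 2 ∧ x 6 = ε 3}

lemma half_add : half + half = 0 := by
  unfold half
  rw [← AddCircle.coe_add]
  norm_num

lemma half_ne : half ≠ 0 := by
  unfold half
  intro h
  rw [AddCircle.coe_eq_zero_iff] at h
  obtain ⟨n, hn⟩ := h
  have h2 : (2 * n : ℝ) = 1 := by
    simp at hn
    rw [hn]; norm_num
  have h3 : 2 * n = 1 := by exact_mod_cast h2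
  omega

lemma neg_half : -half = half := neg_eq_of_add_eq_zero_left half_add

lemma neg_two {a : AddCircle (1 : ℝ)} (h : a = 0 ∨ a = half) : -a = a := by
  rcases h with rfl | rfl
  · exact neg_zero
  · exact neg_half

lemma add_two {a : AddCircle (1 : ℝ)} (h : a = 0 ∨ a = half) :
    a + half = 0 ∨ a + half = half := by
  rcases h with rfl | rfl
  · right; exact zero_add _
  · left; exact half_add

noncomputable def sβ (ε : Fin 4 → AddCircle (1 : ℝ)) : Fin 4 → AddCircle (1 : ℝ) :=
  ![ε 0, ε 1, ε 2 + half, ε 3]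

noncomputable def sγ (ε : Fin 4 → AddCircle (1 : ℝ)) : Fin 4 → AddCircle (1 : ℝ) :=
  ![ε 0, ε 1 + half, ε 2, ε 3 + half]

lemma sβ_mem {ε} (h : ε ∈ E4) : sβ ε ∈ E4 := by
  intro i
  fin_cases i
  · exact h 0
  · exact h 1
  · exact add_two (h 2)
  · exact h 3

lemma sγ_mem {ε} (h : ε ∈ E4) : sγ ε ∈ E4 := by
  intro i
  fin_cases i
  · exact h 0
  · exact add_two (h 1)
  · exact h 2
  · exact add_two (h 3)

lemma mapsβ {ε} (h : ε ∈ E4) : Set.MapsTo tβ (Ctor ε) (Ctor (sβ ε)) := by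
  rintro x ⟨h0, h1, h2, h3⟩
  refine ⟨h0, h1, ?_, ?_⟩
  · change half - x 5 = ε 2 + half
    rw [h2, sub_eq_add_neg, neg_two (h 2), add_comm]
  · change - x 6 = ε 3
    rw [h3, neg_two (h 3)]

lemma mapsγ {ε} (h : ε ∈ E4) : Set.MapsTo tγ (Ctor ε) (Ctor (sγ ε)) := by
  rintro x ⟨h0, h1, h2, h3⟩
  refine ⟨h0, ?_, h2, ?_⟩
  · change half - x 4 = ε 1 + half
    rw [h1, sub_eq_add_neg, neg_two (h 1), add_comm]
  · change half - x 6 = ε 3 + half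
    rw [h3, sub_eq_add_neg, neg_two (h 3), add_comm]

lemma sβ_sβ (ε) : sβ (sβ ε) = ε := by
  funext i
  fin_cases i <;> simp [sβ, add_assoc, half_add]

lemma sγ_sγ (ε) : sγ (sγ ε) = ε := by
  funext i
  fin_cases i <;> simp [sγ, add_assoc, half_add]

lemma bijβ {ε} (h : ε ∈ E4) : Set.BijOn tβ (Ctor ε) (Ctor (sβ ε)) := by
  refine ⟨mapsβ h, tβ_invol.injective.injOn, fun y hy => ⟨tβ y, ?_, tβ_invol y⟩⟩
  have := mapsβ (sβ_mem h) hy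
  rwa [sβ_sβ] at this

lemma bijγ {ε} (h : ε ∈ E4) : Set.BijOn tγ (Ctor ε) (Ctor (sγ ε)) := by
  refine ⟨mapsγ h, tγ_invol.injective.injOn, fun y hy => ⟨tγ y, ?_, tγ_invol y⟩⟩
  have := mapsγ (sγ_mem h) hy
  rwa [sγ_sγ] at this

lemma imgβ {ε} (h : ε ∈ E4) : (⇑pβ) '' Ctor ε = Ctor (sβ ε) := (bijβ h).image_eq

lemma imgγ {ε} (h : ε ∈ E4) : (⇑pγ) '' Ctor ε = Ctor (sγ ε) := (bijγ h).image_eq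

lemma imgβγ {ε} (h : ε ∈ E4) : (⇑(pβ * pγ)) '' Ctor ε = Ctor (sβ (sγ ε)) := by
  rw [Equiv.Perm.coe_mul, Set.image_comp, imgγ h, imgβ (sγ_mem h)]

lemma Ctor_inj {ε δ} (h : Ctor ε = Ctor δ) : ε = δ := by
  have : (![0, 0, 0, ε 0, ε 1, ε 2, ε 3] : T7) ∈ Ctor ε := ⟨rfl, rfl, rfl, rfl⟩
  rw [h] at this
  obtain ⟨h0, h1, h2, h3⟩ := this
  funext i
  fin_cases i
  · exact h0
  · exact h1
  · exact h2
  · exact h3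

lemma ββ : pβ * pβ = 1 := Equiv.ext fun x => tβ_invol x

lemma γγ : pγ * pγ = 1 := Equiv.ext fun x => tγ_invol x

lemma γβ : pγ * pβ = pβ * pγ := by
  refine Equiv.ext fun x => ?_
  change tγ (tβ x) = tβ (tγ x)
  funext i
  fin_cases i
  · exact Eq.refl (-x 0)
  · exact Eq.refl (-x 1)
  · exact Eq.refl (- -x 2)
  · exact Eq.refl (x 3)
  · exact Eq.refl (half - x 4)
  · exact Eq.refl (half - x 5)
  · change half - -x 6 = -(half - x 6)
    rw [neg_sub, sub_neg_eq_add, sub_eq_add_neg, neg_half, add_comm]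

/-- The group generated by `β` and `γ`. -/
noncomputable def HH : Subgroup (Equiv.Perm T7) := Subgroup.closure {pβ, pγ}

lemma β_mem : pβ ∈ HH := Subgroup.subset_closure (by simp)

lemma γ_mem : pγ ∈ HH := Subgroup.subset_closure (by simp)

lemma mem_cases {g} (hg : g ∈ HH) : g = 1 ∨ g = pβ ∨ g = pγ ∨ g = pβ * pγ := by
  have bi : pβ⁻¹ = pβ := inv_eq_of_mul_eq_one_left ββ
  have ci : pγ⁻¹ = pγ := inv_eq_of_mul_eq_one_left γγ
  have key : ∀ x ∈ ({pβ, pγ} : Set (Equiv.Perm T7)), ∀ y : Equiv.Perm T7,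
      (y = 1 ∨ y = pβ ∨ y = pγ ∨ y = pβ * pγ) →
      (x * y = 1 ∨ x * y = pβ ∨ x * y = pγ ∨ x * y = pβ * pγ) := by
    rintro x (rfl | rfl) y (rfl | rfl | rfl | rfl)
    · simp
    · simp [ββ]
    · simp
    · simp [← mul_assoc, ββ]
    · simp
    · simp [γβ]
    · simp [γγ]
    · right; left; rw [← mul_assoc, γβ, mul_assoc, γγ, mul_one]
  induction hg using Subgroup.closure_induction_left with
  | one => simp
  | mul_left x hx y hy ih => exact key x hx y ih
  | inv_mul_cancel x hx y hy ih =>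
    have : x⁻¹ = x := by
      rcases hx with rfl | rfl
      · exact bi
      · exact ci
    rw [this]
    exact key x hx y ih

/-- The orbit of a set. -/
def orb (C : Set T7) : Set (Set T7) := {S | ∃ g ∈ HH, S = (⇑g) '' C}

lemma orb_img {p} (hp : p ∈ HH) (C : Set T7) : orb ((⇑p) '' C) = orb C := by
  ext S
  constructor
  · rintro ⟨g, hg, rfl⟩
    exact ⟨g * p, HH.mul_mem hg hp, by rw [Equiv.Perm.coe_mul, Set.image_comp]⟩
  · rintro ⟨g, hg, rfl⟩
    refine ⟨g * p⁻¹, HH.mul_mem hg (HH.inv_mem hp), ?_⟩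
    rw [← Set.image_comp, ← Equiv.Perm.coe_mul, inv_mul_cancel_right]

lemma mem_orb {ε} (h : ε ∈ E4) {S} (hS : S ∈ orb (Ctor ε)) :
    S = Ctor ε ∨ S = Ctor (sβ ε) ∨ S = Ctor (sγ ε) ∨ S = Ctor (sβ (sγ ε)) := by
  obtain ⟨g, hg, rfl⟩ := hS
  rcases mem_cases hg with rfl | rfl | rfl | rfl
  · left; simp
  · right; left; exact imgβ h
  · right; right; left; exact imgγ h
  · right; right; right; exact imgβγ h

noncomputable def hb (b : Bool) : AddCircle (1 : ℝ) := if b then half else 0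

lemma hb_mem (b) : hb b = 0 ∨ hb b = half := by cases b <;> simp [hb]

lemma hb_surj {a} (h : a = 0 ∨ a = half) : ∃ b, a = hb b := by
  rcases h with rfl | rfl
  · exact ⟨false, by simp [hb]⟩
  · exact ⟨true, by simp [hb]⟩

lemma hb_inj : Function.Injective hb := by
  intro a b h
  cases a <;> cases b <;> simp [hb, half_ne, half_ne.symm] at h ⊢

noncomputable def rep (p : Bool × Bool) : Fin 4 → AddCircle (1 : ℝ) := ![hb p.1, hb p.2, 0, 0]

lemma rep_mem (p) : rep p ∈ E4 := by
  intro i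
  fin_cases i
  · exact hb_mem _
  · exact hb_mem _
  · left; rfl
  · left; rfl

lemma orb_rep_inj : Function.Injective (fun p => orb (Ctor (rep p))) := by
  intro p q h
  have hm : Ctor (rep p) ∈ orb (Ctor (rep p)) := ⟨1, HH.one_mem, by simp⟩
  have h' : orb (Ctor (rep p)) = orb (Ctor (rep q)) := h
  rw [h'] at hm
  rcases mem_orb (rep_mem q) hm with e | e | e | e <;> have e := Ctor_inj e
  · exact Prod.ext (hb_inj (congrFun e 0)) (hb_inj (congrFun e 1))
  · have := congrFun e 2
    simp [rep, sβ, half_ne.symm] at this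
  · have := congrFun e 3
    simp [rep, sγ, half_ne.symm] at this
  · have := congrFun e 3
    simp [rep, sβ, sγ, half_ne.symm] at this

lemma orb_sβ {ε} (h : ε ∈ E4) : orb (Ctor (sβ ε)) = orb (Ctor ε) := by
  rw [← imgβ h, orb_img β_mem]

lemma orb_sγ {ε} (h : ε ∈ E4) : orb (Ctor (sγ ε)) = orb (Ctor ε) := by
  rw [← imgγ h, orb_img γ_mem]

lemma orb_rep0 {ε} (h : ε ∈ E4) (h2 : ε 2 = 0) (h3 : ε 3 = 0) :
    ∃ p, orb (Ctor (rep p)) = orb (Ctor ε) := by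
  obtain ⟨a, ha⟩ := hb_surj (h 0)
  obtain ⟨b, hb'⟩ := hb_surj (h 1)
  refine ⟨(a, b), ?_⟩
  congr 2
  funext i
  fin_cases i
  · exact ha.symm
  · exact hb'.symm
  · exact h2.symm
  · exact h3.symm

lemma orb_rep1 {ε} (h : ε ∈ E4) (h3 : ε 3 = 0) :
    ∃ p, orb (Ctor (rep p)) = orb (Ctor ε) := by
  rcases h 2 with h2 | h2
  · exact orb_rep0 h h2 h3
  · rw [← orb_sβ h]
    exact orb_rep0 (sβ_mem h) (by simp [sβ, h2, half_add]) (by simp [sβ, h3])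

lemma orb_rep2 {ε} (h : ε ∈ E4) :
    ∃ p, orb (Ctor (rep p)) = orb (Ctor ε) := by
  rcases h 3 with h3 | h3
  · exact orb_rep1 h h3
  · rw [← orb_sγ h]
    exact orb_rep1 (sγ_mem h) (by simp [sγ, h3, half_add])

theorem statement11 :
    (∀ ε ∈ E4, Set.BijOn tβ (Ctor ε) (Ctor ![ε 0, ε 1, ε 2 + half, ε 3])) ∧
    (∀ ε ∈ E4, Set.BijOn tγ (Ctor ε) (Ctor ![ε 0, ε 1 + half, ε 2, ε 3 + half])) ∧
    (∀ g ∈ (Subgroup.closure {pβ, pγ} : Subgroup (Equiv.Perm T7)),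
      (∃ ε ∈ E4, (⇑g) '' Ctor ε = Ctor ε) → g = 1) ∧
    Set.ncard {O : Set (Set T7) | ∃ ε ∈ E4,
      O = {S | ∃ g ∈ (Subgroup.closure {pβ, pγ} : Subgroup (Equiv.Perm T7)),
        S = (⇑g) '' Ctor ε}} = 4 := by
  refine ⟨fun ε h => bijβ h, fun ε h => bijγ h, ?_, ?_⟩
  · rintro g hg ⟨ε, hε, he⟩
    rcases mem_cases hg with rfl | rfl | rfl | rfl
    · rfl
    · rw [imgβ hε] at he
      have := congrFun (Ctor_inj he) 2
      simp [sβ, half_ne] at this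
    · rw [imgγ hε] at he
      have := congrFun (Ctor_inj he) 3
      simp [sγ, half_ne] at this
    · rw [imgβγ hε] at he
      have := congrFun (Ctor_inj he) 3
      simp [sβ, sγ, half_ne] at this
  · have : {O : Set (Set T7) | ∃ ε ∈ E4,
      O = {S | ∃ g ∈ (Subgroup.closure {pβ, pγ} : Subgroup (Equiv.Perm T7)),
        S = (⇑g) '' Ctor ε}} = Set.range (fun p => orb (Ctor (rep p))) := by
      ext O
      constructor
      · rintro ⟨ε, hε, rfl⟩
        exact orb_rep2 hε
      · rintro ⟨p, rfl⟩
        exact ⟨rep p, rep_mem p, rfl⟩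
    rw [this, ← Set.image_univ, Set.ncard_image_of_injective _ orb_rep_inj, Set.ncard_univ]
    simp
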